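/- A strict preference on 2^O (O a finite set of objects) is lexicographic if and only if it is both conditionally lexicographic and responsive. -/

import Mathlib

attribute [local instance] Classical.propDecidable

namespace Realloc

/-- A strict preference over bundles: a strict total order on `Finset O`. -/
structure Pref (O : Type) : Type where
  strict : Finset O → Finset O → Prop
  total : ∀ X Y : Finset O, strict X Y ∨ X = Y ∨ strict Y X
  irrefl : ∀ X : Finset O, ¬ strict X X
  trans : ∀ X Y Z : Finset O, strict X Y → strict Y Z → strict X Z

/-- The weak ("at least as good as") relation associated with a strict preference. -/
def Pref.weak {O : Type} (p : Pref O) (X Y : Finset O) : Prop :=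
  p.strict X Y ∨ X = Y

/-- An allocation: nonempty pairwise disjoint bundles whose union is all of `O`. -/
structure Allocation (N O : Type) : Type where
  bundle : N → Finset O
  nonempty : ∀ i : N, (bundle i).Nonempty
  disj : ∀ i j : N, i ≠ j → ∀ o : O, o ∈ bundle i → o ∉ bundle j
  cover : ∀ o : O, ∃ i : N, o ∈ bundle i

variable {N O : Type}

/-- Two preferences induce the same marginal (singleton) ranking over objects. -/
def MargEq (p q : Pref O) : Prop :=
  ∀ x y : O, p.strict {x} {y} ↔ q.strict {x} {y}

/-- Responsive preferences. -/
def Responsive [DecidableEq O] (p : Pref O) : Prop :=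
  ∀ (X : Finset O) (y z : O), y ∉ X → z ∉ X →
    (p.strict (insert y X) (insert z X) ↔ p.strict {y} {z})

/-- Lexicographic preferences: `X` is preferred to `Y` iff the best object of the
symmetric difference belongs to `X`. -/
def Lexicographic [DecidableEq O] (p : Pref O) : Prop :=
  ∀ X Y : Finset O, X ≠ Y →
    (p.strict X Y ↔
      ∃ x ∈ X \ Y, ∀ y ∈ (X \ Y) ∪ (Y \ X), y ≠ x → p.strict {x} {y})

/-- Conditionally lexicographic preferences. -/
def CondLex [DecidableEq O] (p : Pref O) : Prop :=
  ∀ X Y : Finset O, Disjoint X Y → X.Nonempty →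
    ∃! x : O, x ∈ X ∧ ∀ Z : Finset O, Z ⊆ X.erase x → p.strict (insert x Y) (Y ∪ Z)

/-- Monotonic preferences. -/
def Monot (p : Pref O) : Prop :=
  ∀ X Y : Finset O, Y ⊆ X → p.weak X Y

/-- `p'` is a subset-drop strategy for `p` (relative to endowment `ωi`):
some set `X ⊆ O ∖ ωi` is moved to the bottom of the marginal ranking, preserving
the relative marginal order within `X` and within its complement. -/
def SubsetDropStrategy (ωi : Finset O) (p p' : Pref O) : Prop :=
  ∃ X : Set O, (∀ x ∈ X, x ∉ ωi) ∧
    (∀ x ∈ X, ∀ y ∈ X, (p.strict {x} {y} ↔ p'.strict {x} {y})) ∧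
    (∀ x ∉ X, ∀ y ∉ X, (p.strict {x} {y} ↔ p'.strict {x} {y})) ∧
    (∀ x ∈ X, ∀ y ∉ X, p'.strict {y} {x})

/-- `p'` is a drop strategy for `p`: a single object `x ∉ ωi` is moved to the bottom. -/
def DropStrategy (ωi : Finset O) (p p' : Pref O) : Prop :=
  ∃ x : O, x ∉ ωi ∧
    (∀ u v : O, u ≠ x → v ≠ x → (p.strict {u} {v} ↔ p'.strict {u} {v})) ∧
    (∀ y : O, y ≠ x → p'.strict {y} {x})

/-- `p'` is a truncation strategy for `p`: the tail set
`{o ∈ O ∖ ωi : {x} R {o}}` (for some object `x`) is moved to the bottom. -/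
def TruncationStrategy (ωi : Finset O) (p p' : Pref O) : Prop :=
  ∃ x : O,
    (∀ u v : O, (u ∉ ωi ∧ p.weak {x} {u}) → (v ∉ ωi ∧ p.weak {x} {v}) →
      (p.strict {u} {v} ↔ p'.strict {u} {v})) ∧
    (∀ u v : O, ¬(u ∉ ωi ∧ p.weak {x} {u}) → ¬(v ∉ ωi ∧ p.weak {x} {v}) →
      (p.strict {u} {v} ↔ p'.strict {u} {v})) ∧
    (∀ u v : O, (u ∉ ωi ∧ p.weak {x} {u}) → ¬(v ∉ ωi ∧ p.weak {x} {v}) →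
      p'.strict {v} {u})

/-- There is a Pareto-improving trading cycle at the assignment `μ`:
a cyclic sequence of `k+1 ≥ 1` distinct objects and distinct agents, each object owned
(at `μ`) by its agent, such that every agent on the cycle strictly gains by swapping
the object she relinquishes for the object she points to. -/
def ParetoImprovingCycleAt [DecidableEq O] (pref : N → Pref O) (μ : N → Finset O) : Prop :=
  ∃ (k : ℕ) (obj : Fin (k + 1) → O) (ag : Fin (k + 1) → N),
    Function.Injective obj ∧ Function.Injective ag ∧
    (∀ ℓ : Fin (k + 1), obj ℓ ∈ μ (ag ℓ)) ∧
    (∀ ℓ : Fin (k + 1),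
      (pref (ag ℓ)).strict ((insert (obj (ℓ + 1)) (μ (ag ℓ))).erase (obj ℓ)) (μ (ag ℓ)))

/-- Individual-good efficiency of an assignment at a profile. -/
def IGEat [DecidableEq O] (pref : N → Pref O) (μ : N → Finset O) : Prop :=
  ¬ ParetoImprovingCycleAt pref μ

/-- `ν` Pareto dominates `μ` at the profile `pref`. -/
def ParetoDominates (pref : N → Pref O) (ν μ : N → Finset O) : Prop :=
  (∀ i, (pref i).weak (ν i) (μ i)) ∧ ∃ j, (pref j).strict (ν j) (μ j)

/-- Pareto efficiency of an assignment at a profile. -/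
def ParetoEffAt (pref : N → Pref O) (μ : N → Finset O) : Prop :=
  ∀ ν : Allocation N O, ¬ ParetoDominates pref ν.bundle μ

/-- The marginally most-preferred object of a (nonempty) finite set of objects. -/
noncomputable def Pref.best [Nonempty O] (p : Pref O) (S : Finset O) : O :=
  if h : ∃ x : O, x ∈ S ∧ ∀ y ∈ S, p.weak {x} {y} then h.choose
  else Classical.arbitrary O

/-- The conditionally most-preferred object of `S` given the already-held bundle `Y`. -/
noncomputable def Pref.cbest [Nonempty O] [DecidableEq O] (p : Pref O) (S Y : Finset O) : O :=
  if h : ∃ x : O, x ∈ S ∧ ∀ Z : Finset O, Z ⊆ S.erase x → p.strict (insert x Y) (Y ∪ Z)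
  then h.choose else Classical.arbitrary O

/-- The initial owner of an object. -/
noncomputable def Allocation.owner (ω : Allocation N O) (o : O) : N :=
  (ω.cover o).choose

/-- One pass of the generalized TTC algorithm, with fuel.  At each step every agent points
to her marginally best remaining object and every remaining object points to its owner;
the objects lying on cycles of this functional graph (the periodic points of `g`) are
traded: the owner of a cycling object receives the object she points to. -/
noncomputable def TTCaux [Nonempty O] [DecidableEq O] (pref : N → Pref O) (own : O → N) :
    ℕ → Finset O → N → Finset O
  | 0, _, _ => ∅
  | fuel + 1, S, i =>
      let g : O → O := fun o => (pref (own o)).best S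
      let C : Finset O := S.filter fun o => ∃ k : ℕ, 0 < k ∧ g^[k] o = o
      if S.Nonempty then
        ((C.filter fun o => own o = i).image g) ∪ TTCaux pref own fuel (S \ C) i
      else ∅

/-- The generalized Top Trading Cycles rule: the bundle received by agent `i`. -/
noncomputable def TTC [Fintype O] [Nonempty O] [DecidableEq O]
    (pref : N → Pref O) (ω : Allocation N O) (i : N) : Finset O :=
  TTCaux pref ω.owner (Fintype.card O + 1) Finset.univ i

/-- One pass of the Augmented TTC algorithm, with fuel: agents point to their
conditionally most-preferred remaining object given the bundle assigned so far. -/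
noncomputable def ATTCaux [Nonempty O] [DecidableEq O] (pref : N → Pref O) (own : O → N) :
    ℕ → Finset O → (N → Finset O) → N → Finset O
  | 0, _, μ => μ
  | fuel + 1, S, μ =>
      let g : O → O := fun o => (pref (own o)).cbest S (μ (own o))
      let C : Finset O := S.filter fun o => ∃ k : ℕ, 0 < k ∧ g^[k] o = o
      if S.Nonempty then
        ATTCaux pref own fuel (S \ C) (fun j => μ j ∪ ((C.filter fun o => own o = j).image g))
      else μ

/-- The Augmented Top Trading Cycles rule: the bundle received by agent `i`. -/
noncomputable def ATTC [Fintype O] [Nonempty O] [DecidableEq O]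
    (pref : N → Pref O) (ω : Allocation N O) (i : N) : Finset O :=
  ATTCaux pref ω.owner (Fintype.card O + 1) Finset.univ (fun _ => ∅) i

/-- Conditional marginal preference of `p` given the bundle `Y`:
`x` is conditionally better than `y`. -/
def CMarg [DecidableEq O] (p : Pref O) (Y : Finset O) (x y : O) : Prop :=
  p.strict ((insert x Y).erase y) ((insert y Y).erase x)

/-- Weak conditional marginal preference. -/
def CMargWeak [DecidableEq O] (p : Pref O) (Y : Finset O) (x y : O) : Prop :=
  CMarg p Y x y ∨ x = y

/-- Drop strategy on the conditionally lexicographic domain: `x ∉ ωi` becomes the worst,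
with preferences over bundles avoiding `x` unchanged. -/
def DropStrategyCL (ωi : Finset O) (p p' : Pref O) : Prop :=
  ∃ x : O, x ∉ ωi ∧
    (∀ Y : Finset O, Y.Nonempty → x ∉ Y → p'.strict Y {x}) ∧
    (∀ Y Z : Finset O, x ∉ Y → x ∉ Z → (p'.strict Y Z ↔ p.strict Y Z))

section Rules

variable [DecidableEq O]

/-- Balancedness of a rule on the domain `D`. -/
def RBAL (D : Pref O → Prop) (ω : Allocation N O)
    (φ : (N → Pref O) → Allocation N O) : Prop :=
  ∀ P : N → Pref O, (∀ i, D (P i)) → ∀ i, ((φ P).bundle i).card = (ω.bundle i).card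

/-- Individual-good efficiency of a rule on the domain `D`. -/
def RIGE (D : Pref O → Prop) (φ : (N → Pref O) → Allocation N O) : Prop :=
  ∀ P : N → Pref O, (∀ i, D (P i)) → IGEat P ((φ P).bundle)

/-- Pareto efficiency of a rule on the domain `D`. -/
def RPE (D : Pref O → Prop) (φ : (N → Pref O) → Allocation N O) : Prop :=
  ∀ P : N → Pref O, (∀ i, D (P i)) → ParetoEffAt P ((φ P).bundle)

/-- Individual rationality of a rule on the domain `D`. -/
def RIR (D : Pref O → Prop) (ω : Allocation N O)
    (φ : (N → Pref O) → Allocation N O) : Prop :=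
  ∀ P : N → Pref O, (∀ i, D (P i)) → ∀ i, (P i).weak ((φ P).bundle i) (ω.bundle i)

/-- The worst-endowment lower bound of a rule on the domain `D`: no agent receives an
object marginally worse than the marginally worst object of her endowment. -/
def RWELB (D : Pref O → Prop) (ω : Allocation N O)
    (φ : (N → Pref O) → Allocation N O) : Prop :=
  ∀ P : N → Pref O, (∀ i, D (P i)) → ∀ i, ∀ o ∈ (φ P).bundle i,
    ∀ w ∈ ω.bundle i, (∀ y ∈ ω.bundle i, (P i).weak {y} {w}) → (P i).weak {o} {w}

/-- Marginality of a rule on the domain `D`. -/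
def RMAR (D : Pref O → Prop) (φ : (N → Pref O) → Allocation N O) : Prop :=
  ∀ P P' : N → Pref O, (∀ i, D (P i)) → (∀ i, D (P' i)) →
    (∀ i, MargEq (P i) (P' i)) → ∀ i, (φ P).bundle i = (φ P').bundle i

variable [DecidableEq N]

/-- Truncation-proofness of a rule on the domain `D`. -/
def RTP (D : Pref O → Prop) (ω : Allocation N O)
    (φ : (N → Pref O) → Allocation N O) : Prop :=
  ∀ P : N → Pref O, (∀ i, D (P i)) → ∀ i : N, ∀ p' : Pref O, D p' →
    TruncationStrategy (ω.bundle i) (P i) p' →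
    (P i).weak ((φ P).bundle i) ((φ (Function.update P i p')).bundle i)

/-- Drop strategy-proofness of a rule on the domain `D`. -/
def RDSP (D : Pref O → Prop) (ω : Allocation N O)
    (φ : (N → Pref O) → Allocation N O) : Prop :=
  ∀ P : N → Pref O, (∀ i, D (P i)) → ∀ i : N, ∀ p' : Pref O, D p' →
    DropStrategy (ω.bundle i) (P i) p' →
    (P i).weak ((φ P).bundle i) ((φ (Function.update P i p')).bundle i)

/-- Subset-drop strategy-proofness of a rule on the domain `D`. -/
def RSDSP (D : Pref O → Prop) (ω : Allocation N O)
    (φ : (N → Pref O) → Allocation N O) : Prop :=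
  ∀ P : N → Pref O, (∀ i, D (P i)) → ∀ i : N, ∀ p' : Pref O, D p' →
    SubsetDropStrategy (ω.bundle i) (P i) p' →
    (P i).weak ((φ P).bundle i) ((φ (Function.update P i p')).bundle i)

/-- Worst-endowment lower bound on the conditionally lexicographic domain, formulated
with conditional marginal preferences. -/
def RWELBCL (D : Pref O → Prop) (ω : Allocation N O)
    (φ : (N → Pref O) → Allocation N O) : Prop :=
  ∀ P : N → Pref O, (∀ i, D (P i)) → ∀ i, ∀ o ∈ (φ P).bundle i,
    ∀ w ∈ ω.bundle i,
      (∀ y ∈ ω.bundle i, CMargWeak (P i) ((φ P).bundle i) y w) →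
      CMargWeak (P i) ((φ P).bundle i) o w

/-- Drop strategy-proofness on the conditionally lexicographic domain. -/
def RDSPCL (D : Pref O → Prop) (ω : Allocation N O)
    (φ : (N → Pref O) → Allocation N O) : Prop :=
  ∀ P : N → Pref O, (∀ i, D (P i)) → ∀ i : N, ∀ p' : Pref O, D p' →
    DropStrategyCL (ω.bundle i) (P i) p' →
    (P i).weak ((φ P).bundle i) ((φ (Function.update P i p')).bundle i)

end Rules

/-- Agent `i`'s opportunity set under TTC when reporting `p`: the set of bundles
she may receive as others' (responsive) reports vary. -/
def Opp [Fintype O] [Nonempty O] [DecidableEq O] (ω : Allocation N O) (i : N)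
    (p : Pref O) : Set (Finset O) :=
  {A | ∃ Q : N → Pref O, (∀ j, Responsive (Q j)) ∧ Q i = p ∧ TTC Q ω i = A}


theorem aux_best {O : Type} (p : Pref O) (S : Finset O) (hS : S.Nonempty) :
    ∃ x ∈ S, ∀ y ∈ S, y ≠ x → p.strict {x} {y} := by
  classical
  induction hS using Finset.Nonempty.cons_induction with
  | singleton a => exact ⟨a, by simp, by simp⟩
  | cons a s ha hs ih =>
    obtain ⟨x, hx, hb⟩ := ih
    rcases p.total {a} {x} with h | h | h
    · refine ⟨a, by simp, fun y hy hya => ?_⟩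
      have hy' : y ∈ s := by
        rcases Finset.mem_cons.1 hy with h1 | h1
        · exact absurd h1 hya
        · exact h1
      by_cases hyx : y = x
      · rw [hyx]; exact h
      · exact p.trans _ _ _ h (hb y hy' hyx)
    · have : a = x := Finset.singleton_injective h
      exact absurd (this ▸ hx) ha
    · refine ⟨x, Finset.mem_cons_of_mem hx, fun y hy hyx => ?_⟩
      rcases Finset.mem_cons.1 hy with h1 | h1
      · rw [h1]; exact h
      · exact hb y h1 hyx

theorem aux_asymm {O : Type} (p : Pref O) {X Y : Finset O} (h : p.strict X Y)
    (h' : p.strict Y X) : False := p.irrefl _ (p.trans _ _ _ h h')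

theorem aux_insert {O : Type} [DecidableEq O] (p : Pref O) (hc : CondLex p)
    (x : O) (Y : Finset O) (hx : x ∉ Y) : p.strict (insert x Y) Y := by
  obtain ⟨z, ⟨hz, h⟩, -⟩ := hc {x} Y (by simpa using hx) (by simp)
  have hzx : z = x := by simpa using hz
  subst hzx
  simpa using h ∅ (by simp)

theorem aux_mono {O : Type} [DecidableEq O] (p : Pref O) (hc : CondLex p)
    (Y W : Finset O) : p.strict (Y ∪ W) Y ∨ Y ∪ W = Y := by
  induction W using Finset.induction_on with
  | empty => right; simp
  | insert a s ha ih =>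
    rw [Finset.union_insert]
    by_cases h : a ∈ Y ∪ s
    · rw [Finset.insert_eq_of_mem h]; exact ih
    · have h1 := aux_insert p hc a _ h
      left
      rcases ih with h2 | h2
      · exact p.trans _ _ _ h1 h2
      · rw [h2] at h1 ⊢; exact h1

theorem aux_key {O : Type} [DecidableEq O] (p : Pref O) (hc : CondLex p) (hr : Responsive p)
    (X Y : Finset O) (x : O) (hx : x ∈ X \ Y)
    (hb : ∀ y ∈ (X \ Y) ∪ (Y \ X), y ≠ x → p.strict {x} {y}) : p.strict X Y := by
  obtain ⟨z, ⟨hz, h⟩, -⟩ := hc ((X \ Y) ∪ (Y \ X)) (X ∩ Y)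
    (by rw [Finset.disjoint_left]; intro a; simp; tauto) ⟨x, by simp [hx]⟩
  have hzx : z = x := by
    by_contra hne
    have h1 := h {x} (by
      intro a ha
      rw [Finset.mem_singleton] at ha
      subst ha
      exact Finset.mem_erase.2 ⟨Ne.symm hne, Finset.mem_union_left _ hx⟩)
    have h2 : X ∩ Y ∪ {x} = insert x (X ∩ Y) := by ext; simp [or_comm]
    rw [h2, hr _ _ _ (by simp at hz ⊢; tauto) (by simp at hx ⊢; tauto)] at h1
    exact aux_asymm p h1 (hb z hz hne)
  subst hzx
  have h1 := h (Y \ X) (by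
    intro a ha
    simp at ha hx ⊢
    refine ⟨?_, by tauto⟩
    rintro rfl
    tauto)
  have h2 : X ∩ Y ∪ Y \ X = Y := by ext; simp; tauto
  have h3 : insert z (X ∩ Y) ∪ X = X := by
    apply Finset.union_eq_right.2
    intro a ha
    simp at ha hx
    rcases ha with rfl | ha
    · exact hx.1
    · exact ha.1
  rw [h2] at h1
  have h4 := aux_mono p hc (insert z (X ∩ Y)) X
  rw [h3] at h4
  rcases h4 with h4 | h4
  · exact p.trans _ _ _ h4 h1
  · rw [← h4] at h1; exact h1

/-- A strict preference on bundles is lexicographic iff it is both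
conditionally lexicographic and responsive. -/
theorem stmt19 {O : Type} [Fintype O] [DecidableEq O] (p : Pref O) :
    Lexicographic p ↔ (CondLex p ∧ Responsive p) := by
  constructor
  · intro hl
    constructor
    · intro X Y hd hX
      obtain ⟨x, hx, hb⟩ := aux_best p X hX
      refine ⟨x, ⟨hx, fun Z hZ => ?_⟩, ?_⟩
      · have hxY : x ∉ Y := Finset.disjoint_left.1 hd hx
        have hxZ : x ∉ Z := fun h => by simpa using hZ h
        have hm : x ∈ insert x Y \ (Y ∪ Z) := by simp [hxY, hxZ]
        refine (hl _ _ ?_).2 ⟨x, hm, ?_⟩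
        · intro he
          rw [he] at hm
          simp at hm
        · intro y hy hyx
          refine hb y ?_ hyx
          simp at hy
          have : y ∈ Z := by tauto
          exact Finset.mem_of_mem_erase (hZ this)
      · rintro z ⟨hz, h⟩
        by_contra hne
        have h1 := h {x} (by
          intro a ha
          rw [Finset.mem_singleton] at ha
          subst ha
          exact Finset.mem_erase.2 ⟨Ne.symm hne, hx⟩)
        have hxY : x ∉ Y := Finset.disjoint_left.1 hd hx
        have hzY : z ∉ Y := Finset.disjoint_left.1 hd hz
        have hne2 : insert z Y ≠ Y ∪ {x} := by
          intro he
          have : z ∈ Y ∪ {x} := by rw [← he]; simp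
          simp at this
          tauto
        obtain ⟨w, hw, hw2⟩ := (hl _ _ hne2).1 h1
        have hwz : w = z := by simp at hw; tauto
        subst hwz
        exact aux_asymm p (hb w hz hne)
          (hw2 x (by simp [hxY, Ne.symm hne]) (Ne.symm hne))
    · intro X y z hy hz
      by_cases hyz : y = z
      · subst hyz
        exact ⟨fun h => absurd h (p.irrefl _), fun h => absurd h (p.irrefl _)⟩
      have hne : insert y X ≠ insert z X := by
        intro he
        have : y ∈ insert z X := by rw [← he]; simp
        simp at this
        tauto
      rw [hl _ _ hne]
      constructor
      · rintro ⟨w, hw, hw2⟩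
        have hwz : w = y := by simp at hw; tauto
        subst hwz
        exact hw2 z (by simp [hz, Ne.symm hyz]) (Ne.symm hyz)
      · intro h
        refine ⟨y, by simp [hy, hyz], fun w hw hwy => ?_⟩
        have hwz : w = z := by simp at hw; tauto
        rw [hwz]; exact h
  · rintro ⟨hc, hr⟩ X Y hne
    constructor
    · intro h
      have hS : ((X \ Y) ∪ (Y \ X)).Nonempty := by
        rw [Finset.nonempty_iff_ne_empty]
        intro he
        apply hne
        rw [Finset.union_eq_empty, Finset.sdiff_eq_empty_iff_subset,
          Finset.sdiff_eq_empty_iff_subset] at he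
        exact Finset.Subset.antisymm he.1 he.2
      obtain ⟨x, hx, hb⟩ := aux_best p _ hS
      rcases Finset.mem_union.1 hx with h1 | h1
      · exact ⟨x, h1, hb⟩
      · exact (aux_asymm p h (aux_key p hc hr Y X x h1
          (by rw [Finset.union_comm]; exact hb))).elim
    · rintro ⟨x, hx, hb⟩
      exact aux_key p hc hr X Y x hx hb

end Realloc
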